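/- The entrywise application of τ to 3 × 3 quaternionic matrices preserves trace-one Hermitian projectors: if A is a 3 × 3 matrix over ℍ with Aᴴ = A (where Aᴴ is the conjugate transpose with respect to quaternionic conjugation), A·A = A, and trace A = 1, then the matrix τ(A) with entries τ(A)ᵢⱼ = τ(Aᵢⱼ) also satisfies τ(A)ᴴ = τ(A), τ(A)·τ(A) = τ(A), and trace τ(A) = 1. -/

import Mathlib

open Quaternion Matrix

/-- The involution of the quaternions obtained by conjugating both complex
coordinates in `ℍ = ℂ ⊕ ℂj`: `τ⟨a,b,c,d⟩ = ⟨a,−b,c,−d⟩`. -/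
def qtau (x : ℍ[ℝ]) : ℍ[ℝ] := ⟨x.re, -x.imI, x.imJ, -x.imK⟩

theorem qtau_re (x : ℍ[ℝ]) : (qtau x).re = x.re := rfl

theorem qtau_imI (x : ℍ[ℝ]) : (qtau x).imI = -x.imI := rfl

theorem qtau_imJ (x : ℍ[ℝ]) : (qtau x).imJ = x.imJ := rfl

theorem qtau_imK (x : ℍ[ℝ]) : (qtau x).imK = -x.imK := rfl

theorem qtau_add (x y : ℍ[ℝ]) : qtau (x + y) = qtau x + qtau y := by
  ext <;> simp [qtau_re, qtau_imI, qtau_imJ, qtau_imK] <;> try ring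

theorem qtau_mul (x y : ℍ[ℝ]) : qtau (x * y) = qtau x * qtau y := by
  ext <;> simp [qtau_re, qtau_imI, qtau_imJ, qtau_imK] <;> try ring

theorem qtau_star (x : ℍ[ℝ]) : qtau (star x) = star (qtau x) := by
  ext <;> simp [qtau_re, qtau_imI, qtau_imJ, qtau_imK]

theorem qtau_one : qtau 1 = 1 := by
  ext <;> simp [qtau_re, qtau_imI, qtau_imJ, qtau_imK]

theorem entrywise_qtau_preserves_trace_one_hermitian_projectors
    (A : Matrix (Fin 3) (Fin 3) ℍ[ℝ])
    (hHerm : Aᴴ = A) (hProj : A * A = A) (hTr : A.trace = 1) :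
    (A.map qtau)ᴴ = A.map qtau ∧
    (A.map qtau) * (A.map qtau) = A.map qtau ∧
    (A.map qtau).trace = 1 := by
  refine ⟨?_, ?_, ?_⟩
  · ext1 i j
    have h := congrFun (congrFun hHerm i) j
    rw [Matrix.conjTranspose_apply] at h
    rw [Matrix.conjTranspose_apply, Matrix.map_apply, Matrix.map_apply, ← qtau_star, h]
  · ext1 i j
    have h := congrArg qtau (congrFun (congrFun hProj i) j)
    rw [Matrix.mul_apply, Fin.sum_univ_three] at h
    simp only [qtau_add, qtau_mul] at h
    rw [Matrix.mul_apply, Fin.sum_univ_three]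
    exact h
  · have h := congrArg qtau hTr
    rw [Matrix.trace_fin_three, qtau_add, qtau_add, qtau_one] at h
    rw [Matrix.trace_fin_three]
    exact h
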